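/- Let R → R′ be a stabilization of a rectangular diagram R, and let P be any vertex of the connected component of R on which this stabilization occurs. Then there is a stabilization R → R″ of the same type (I or II) occurring in a small neighborhood of P such that the diagrams R′ and R″ can be connected by a finite sequence of commutations and cyclic permutations. -/

import Mathlib

noncomputable section
open scoped Classical

/-- A point of the plane. -/
abbrev Pt : Type := ℝ × ℝ

/-- A rectangular diagram: a finite set of points in the plane such that every
vertical or horizontal straight line contains either no points or exactly two points of it. -/
def IsDiagram (R : Finset Pt) : Prop :=
  ∀ p ∈ R, (R.filter (fun q => q.1 = p.1)).card = 2 ∧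
    (R.filter (fun q => q.2 = p.2)).card = 2

/-- The complexity of a rectangular diagram: the number of its vertical edges. -/
def complexity (R : Finset Pt) : ℕ := (R.image Prod.fst).card

/-- Moving the vertical line `x0` to position `x1` (all other points unchanged). -/
def vmap (x0 x1 : ℝ) : Pt → Pt := fun p => if p.1 = x0 then (x1, p.2) else p

/-- Moving the horizontal line `y0` to position `y1`. -/
def hmap (y0 y1 : ℝ) : Pt → Pt := fun p => if p.2 = y0 then (p.1, y1) else p

/-- Exchanging the vertical lines `x1` and `x2`. -/
def swapv (x1 x2 : ℝ) : Pt → Pt := fun p =>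
  if p.1 = x1 then (x2, p.2) else if p.1 = x2 then (x1, p.2) else p

/-- Exchanging the horizontal lines `y1` and `y2`. -/
def swaph (y1 y2 : ℝ) : Pt → Pt := fun p =>
  if p.2 = y1 then (p.1, y2) else if p.2 = y2 then (p.1, y1) else p

/-- `f` realizes a cyclic permutation on the finite set `R`:  an extreme (left/right/top/bottom)
edge is moved to the opposite side of the diagram. -/
def CyclicData (R : Finset Pt) (f : Pt → Pt) : Prop :=
  (∃ x0 x1 : ℝ, (∃ p ∈ R, p.1 = x0) ∧
     (((∀ p ∈ R, x0 ≤ p.1) ∧ ∀ p ∈ R, p.1 ≠ x0 → p.1 < x1) ∨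
      ((∀ p ∈ R, p.1 ≤ x0) ∧ ∀ p ∈ R, p.1 ≠ x0 → x1 < p.1)) ∧
     f = vmap x0 x1) ∨
  (∃ y0 y1 : ℝ, (∃ p ∈ R, p.2 = y0) ∧
     (((∀ p ∈ R, y0 ≤ p.2) ∧ ∀ p ∈ R, p.2 ≠ y0 → p.2 < y1) ∨
      ((∀ p ∈ R, p.2 ≤ y0) ∧ ∀ p ∈ R, p.2 ≠ y0 → y1 < p.2)) ∧
     f = hmap y0 y1)

/-- The pairs of second coordinates of the points of `R` on the vertical lines `x1`, `x2`
do not interleave. -/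
def NoInterleaveV (R : Finset Pt) (x1 x2 : ℝ) : Prop :=
  ∀ p ∈ R, ∀ p' ∈ R, ∀ q ∈ R, ∀ q' ∈ R,
    p.1 = x1 → p'.1 = x1 → q.1 = x2 → q'.1 = x2 →
    ¬ ((p.2 < q.2 ∧ q.2 < p'.2 ∧ p'.2 < q'.2) ∨
       (q.2 < p.2 ∧ p.2 < q'.2 ∧ q'.2 < p'.2))

/-- The pairs of first coordinates of the points of `R` on the horizontal lines `y1`, `y2`
do not interleave. -/
def NoInterleaveH (R : Finset Pt) (y1 y2 : ℝ) : Prop :=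
  ∀ p ∈ R, ∀ p' ∈ R, ∀ q ∈ R, ∀ q' ∈ R,
    p.2 = y1 → p'.2 = y1 → q.2 = y2 → q'.2 = y2 →
    ¬ ((p.1 < q.1 ∧ q.1 < p'.1 ∧ p'.1 < q'.1) ∨
       (q.1 < p.1 ∧ p.1 < q'.1 ∧ q'.1 < p'.1))

/-- `f` realizes a commutation on `R`: two neighboring parallel edges, whose pairs of endpoints
projected to the common axis are disjoint and do not interleave, are exchanged. -/
def CommData (R : Finset Pt) (f : Pt → Pt) : Prop :=
  (∃ x1 x2 : ℝ, x1 ≠ x2 ∧ (∃ p ∈ R, p.1 = x1) ∧ (∃ p ∈ R, p.1 = x2) ∧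
     (∀ p ∈ R, ¬ (min x1 x2 < p.1 ∧ p.1 < max x1 x2)) ∧
     (∀ p ∈ R, ∀ q ∈ R, p.1 = x1 → q.1 = x2 → p.2 ≠ q.2) ∧
     NoInterleaveV R x1 x2 ∧ f = swapv x1 x2) ∨
  (∃ y1 y2 : ℝ, y1 ≠ y2 ∧ (∃ p ∈ R, p.2 = y1) ∧ (∃ p ∈ R, p.2 = y2) ∧
     (∀ p ∈ R, ¬ (min y1 y2 < p.2 ∧ p.2 < max y1 y2)) ∧
     (∀ p ∈ R, ∀ q ∈ R, p.2 = y1 → q.2 = y2 → p.1 ≠ q.1) ∧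
     NoInterleaveH R y1 y2 ∧ f = swaph y1 y2)

/-- A cyclic permutation move of rectangular diagrams. -/
def CyclicMove (R R' : Finset Pt) : Prop :=
  IsDiagram R ∧ IsDiagram R' ∧ ∃ f, CyclicData R f ∧ R' = R.image f

/-- A commutation move of rectangular diagrams. -/
def CommMove (R R' : Finset Pt) : Prop :=
  IsDiagram R ∧ IsDiagram R' ∧ ∃ f, CommData R f ∧ R' = R.image f

/-- The type of a stabilization/destabilization. -/
inductive StabType
  | I : StabType
  | II : StabType
deriving DecidableEq

/-- Result of replacing the vertex `(x, y)` by the three other vertices of the small square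
with corners `(x, y)`, `(x', y)`, `(x, y')`, `(x', y')`. -/
def stabSet (x y x' y' : ℝ) (C : Finset Pt) : Finset Pt :=
  insert ((x', y) : Pt) (insert ((x, y') : Pt) (insert ((x', y') : Pt) (C.erase (x, y))))

/-- The data of a stabilization of `R` at the vertex `(x, y)`, yielding `R'`:  the vertex is
replaced by the three other corners of a small square (`x'`, `y'` are fresh coordinates,
and no coordinate of `R` lies strictly between `x, x'` nor between `y, y'`). -/
def StabData (x y x' y' : ℝ) (R R' : Finset Pt) : Prop :=
  (x, y) ∈ R ∧ x ≠ x' ∧ y ≠ y' ∧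
  (∀ p ∈ R, p.1 ≠ x') ∧ (∀ p ∈ R, p.2 ≠ y') ∧
  (∀ p ∈ R, ¬ (min x x' < p.1 ∧ p.1 < max x x')) ∧
  (∀ p ∈ R, ¬ (min y y' < p.2 ∧ p.2 < max y y')) ∧
  R' = stabSet x y x' y' R

/-- A stabilization of type `t` occurring at the vertex `v` of `R`.  The type is I when the two
new short edges point from their common vertex downward-and-leftward or upward-and-rightward. -/
def StabMoveAt (t : StabType) (v : Pt) (R R' : Finset Pt) : Prop :=
  IsDiagram R ∧ IsDiagram R' ∧
  ∃ x' y' : ℝ, StabData v.1 v.2 x' y' R R' ∧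
    (t = StabType.I ↔ 0 < (v.1 - x') * (v.2 - y'))

/-- A stabilization of type `t`. -/
def StabMove (t : StabType) (R R' : Finset Pt) : Prop :=
  ∃ v : Pt, StabMoveAt t v R R'

/-- A complexity-preserving elementary move: a cyclic permutation or a commutation. -/
def ExchangeMove (R R' : Finset Pt) : Prop := CyclicMove R R' ∨ CommMove R R'

/-- An elementary move of rectangular diagrams: a cyclic permutation, a commutation,
a stabilization or a destabilization. -/
def ElemMove (R R' : Finset Pt) : Prop :=
  CyclicMove R R' ∨ CommMove R R' ∨ ∃ t, StabMove t R R' ∨ StabMove t R' R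

/-- An elementary move involving no stabilization or destabilization of type other than `t`. -/
def LegMove (t : StabType) (R R' : Finset Pt) : Prop :=
  CyclicMove R R' ∨ CommMove R R' ∨ StabMove t R R' ∨ StabMove t R' R

/-- Legendrian equivalence: connected by a finite sequence of elementary moves containing
no type II stabilizations or destabilizations. -/
def LegEquiv : Finset Pt → Finset Pt → Prop :=
  Relation.ReflTransGen (LegMove StabType.I)

/-- Connected by a finite sequence of elementary moves containing
no type I stabilizations or destabilizations. -/
def MirrorEquiv : Finset Pt → Finset Pt → Prop :=
  Relation.ReflTransGen (LegMove StabType.II)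

/-- An elementary simplification of type `t` : a finite sequence of cyclic permutations and
commutations followed by one destabilization of type `t`. -/
def ElemSimp (t : StabType) (R R' : Finset Pt) : Prop :=
  ∃ S, Relation.ReflTransGen ExchangeMove R S ∧ StabMove t R' S
/-- A rectangular diagram of a knot: a nonempty rectangular diagram none of whose nonempty
proper subsets is a rectangular diagram (i.e. it consists of a single closed broken line). -/
def IsKnotDiagram (R : Finset Pt) : Prop :=
  IsDiagram R ∧ R.Nonempty ∧ ∀ S ⊆ R, IsDiagram S → S.Nonempty → S = R

/-- A connected component of a rectangular diagram `R`: a subset of `R` that is itself a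
rectangular diagram of a knot. -/
def IsComponent (R K : Finset Pt) : Prop := K ⊆ R ∧ IsKnotDiagram K

/-- A rectangular path: a finite planar point set that becomes a rectangular diagram of a knot
after adding exactly one point, or exactly two points lying on one vertical or horizontal line;
a single point is also a rectangular path. -/
def IsPath (P : Finset Pt) : Prop :=
  (∃ p : Pt, P = {p}) ∨
  (∃ q : Pt, q ∉ P ∧ IsKnotDiagram (insert q P)) ∨
  (∃ q r : Pt, q ≠ r ∧ q ∉ P ∧ r ∉ P ∧ (q.1 = r.1 ∨ q.2 = r.2) ∧
     IsKnotDiagram (insert q (insert r P)))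

/-- The ends of a rectangular path: the (vertical — `true`, or horizontal — `false`) straight
lines containing exactly one vertex of the path. -/
def Ends (P : Finset Pt) : Set (Bool × ℝ) :=
  {l | (l.1 = true ∧ (P.filter (fun p => p.1 = l.2)).card = 1) ∨
       (l.1 = false ∧ (P.filter (fun p => p.2 = l.2)).card = 1)}

/-- Transposition. -/
def trp (Q : Finset Pt) : Finset Pt := Q.image Prod.swap

/-- Relabelling of the columns. -/
def cmv (f : ℝ → ℝ) (Q : Finset Pt) : Finset Pt := Q.image (fun p => (f p.1, p.2))

def mvf (a b : ℝ) : ℝ → ℝ := fun t => if t = a then b else t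
def swf (a b : ℝ) : ℝ → ℝ := fun t => if t = a then b else if t = b then a else t

lemma mem_trp (Q : Finset Pt) (a b : ℝ) : (a, b) ∈ trp Q ↔ (b, a) ∈ Q := by
  simp only [trp, Finset.mem_image]
  constructor
  · rintro ⟨⟨c, d⟩, h, e⟩
    simp only [Prod.swap_prod_mk, Prod.mk.injEq] at e
    obtain ⟨rfl, rfl⟩ := e
    exact h
  · intro h
    exact ⟨(b, a), h, rfl⟩

lemma trp_trp (Q : Finset Pt) : trp (trp Q) = Q := by
  ext ⟨a, b⟩
  rw [mem_trp, mem_trp]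

lemma mem_cmv (f : ℝ → ℝ) (Q : Finset Pt) (a b : ℝ) :
    (a, b) ∈ cmv f Q ↔ ∃ c, (c, b) ∈ Q ∧ f c = a := by
  simp only [cmv, Finset.mem_image, Prod.mk.injEq, Prod.exists]
  constructor
  · rintro ⟨c, d, h, e, rfl⟩
    exact ⟨c, h, e⟩
  · rintro ⟨c, h, e⟩
    exact ⟨c, b, h, e, rfl⟩

lemma cmv_cmv (f g : ℝ → ℝ) (Q : Finset Pt) : cmv f (cmv g Q) = cmv (fun t => f (g t)) Q := by
  simp only [cmv, Finset.image_image]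
  rfl

lemma cmv_congr {f g : ℝ → ℝ} {Q : Finset Pt} (h : ∀ p ∈ Q, f p.1 = g p.1) :
    cmv f Q = cmv g Q := by
  apply Finset.image_congr
  intro p hp
  simp only [h p hp]

lemma cmv_id {f : ℝ → ℝ} {Q : Finset Pt} (h : ∀ p ∈ Q, f p.1 = p.1) : cmv f Q = Q := by
  rw [cmv_congr (g := fun t => t) h]
  simp [cmv]

def colInj (f : ℝ → ℝ) (Q : Finset Pt) : Prop :=
  ∀ p ∈ Q, ∀ q ∈ Q, f p.1 = f q.1 → p.1 = q.1

lemma diag_image {Q : Finset Pt} (hQ : IsDiagram Q) {f : ℝ → ℝ} (hf : colInj f Q) :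
    IsDiagram (cmv f Q) := by
  intro p hp
  obtain ⟨q, hq, rfl⟩ := Finset.mem_image.1 hp
  have inj : Set.InjOn (fun p : Pt => ((f p.1, p.2) : Pt)) (Q : Set Pt) := by
    intro a ha b hb e
    simp only [Prod.mk.injEq] at e
    exact Prod.ext (hf a ha b hb e.1) e.2
  obtain ⟨h1, h2⟩ := hQ q hq
  constructor
  · rw [← h1, ← Finset.card_image_of_injOn (f := fun p : Pt => ((f p.1, p.2) : Pt))
      (s := Q.filter (fun r => r.1 = q.1))
      (inj.mono (by intro a ha; simp at ha ⊢; exact ha.1))]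
    congr 1
    ext r
    simp only [cmv, Finset.mem_filter, Finset.mem_image]
    constructor
    · rintro ⟨⟨a, ha, rfl⟩, e⟩
      exact ⟨a, ⟨ha, hf a ha q hq e⟩, rfl⟩
    · rintro ⟨a, ⟨ha, e⟩, rfl⟩
      exact ⟨⟨a, ha, rfl⟩, by simp only [e]⟩
  · rw [← h2, ← Finset.card_image_of_injOn (f := fun p : Pt => ((f p.1, p.2) : Pt))
      (s := Q.filter (fun r => r.2 = q.2))
      (inj.mono (by intro a ha; simp at ha ⊢; exact ha.1))]
    congr 1
    ext r
    simp only [cmv, Finset.mem_filter, Finset.mem_image]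
    constructor
    · rintro ⟨⟨a, ha, rfl⟩, e⟩
      exact ⟨a, ⟨ha, e⟩, rfl⟩
    · rintro ⟨a, ⟨ha, e⟩, rfl⟩
      exact ⟨⟨a, ha, rfl⟩, e⟩

lemma diag_trp {Q : Finset Pt} (hQ : IsDiagram Q) : IsDiagram (trp Q) := by
  rintro ⟨a, b⟩ hp
  rw [mem_trp] at hp
  obtain ⟨h1, h2⟩ := hQ _ hp
  constructor
  · rw [← h2, ← Finset.card_image_of_injective _ Prod.swap_injective]
    congr 1
    ext ⟨c, d⟩
    simp [trp, Prod.ext_iff]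
  · rw [← h1, ← Finset.card_image_of_injective _ Prod.swap_injective]
    congr 1
    ext ⟨c, d⟩
    simp [trp, Prod.ext_iff]
    grind

abbrev EE : Finset Pt → Finset Pt → Prop := Relation.ReflTransGen ExchangeMove

def JJ (Q S : Finset Pt) : Prop :=
  (EE Q S ∧ EE S Q) ∧ (EE (trp Q) (trp S) ∧ EE (trp S) (trp Q))

lemma JJ.refl (Q : Finset Pt) : JJ Q Q := ⟨⟨.refl, .refl⟩, ⟨.refl, .refl⟩⟩
lemma JJ.symm {Q S : Finset Pt} (h : JJ Q S) : JJ S Q := ⟨h.1.symm, h.2.symm⟩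
lemma JJ.trans {Q S T : Finset Pt} (h : JJ Q S) (k : JJ S T) : JJ Q T :=
  ⟨⟨h.1.1.trans k.1.1, k.1.2.trans h.1.2⟩, ⟨h.2.1.trans k.2.1, k.2.2.trans h.2.2⟩⟩
lemma JJ.tr {Q S : Finset Pt} (h : JJ Q S) : JJ (trp Q) (trp S) := by
  refine ⟨h.2, ?_⟩
  rw [trp_trp, trp_trp]
  exact h.1

lemma vmap_image (a b : ℝ) (Q : Finset Pt) : Q.image (vmap a b) = cmv (mvf a b) Q := by
  apply Finset.image_congr
  intro p _
  simp only [vmap, mvf]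
  split_ifs <;> rfl

lemma hmap_image (a b : ℝ) (Q : Finset Pt) :
    (trp Q).image (hmap a b) = trp (cmv (mvf a b) Q) := by
  simp only [trp, cmv, Finset.image_image]
  apply Finset.image_congr
  intro p _
  simp only [hmap, mvf, Function.comp, Prod.swap]
  split_ifs <;> rfl

lemma swapv_image (a b : ℝ) (Q : Finset Pt) : Q.image (swapv a b) = cmv (swf a b) Q := by
  apply Finset.image_congr
  intro p _
  simp only [swapv, swf]
  split_ifs <;> rfl

lemma swaph_image (a b : ℝ) (Q : Finset Pt) :
    (trp Q).image (swaph a b) = trp (cmv (swf a b) Q) := by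
  simp only [trp, cmv, Finset.image_image]
  apply Finset.image_congr
  intro p _
  simp only [swaph, swf, Function.comp, Prod.swap]
  split_ifs <;> rfl

lemma swap_mem_trp {Q : Finset Pt} {p : Pt} : p ∈ trp Q ↔ (p.2, p.1) ∈ Q := mem_trp Q p.1 p.2

/-- one cyclic move, in either orientation -/
lemma cyc_EE {Q S : Finset Pt} (hQ : IsDiagram Q) (hS : IsDiagram S) (x0 x1 : ℝ)
    (he : S = cmv (mvf x0 x1) Q) (hx : ∃ p ∈ Q, p.1 = x0)
    (h : ((∀ p ∈ Q, x0 ≤ p.1) ∧ ∀ p ∈ Q, p.1 ≠ x0 → p.1 < x1) ∨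
      ((∀ p ∈ Q, p.1 ≤ x0) ∧ ∀ p ∈ Q, p.1 ≠ x0 → x1 < p.1)) :
    EE Q S ∧ EE (trp Q) (trp S) := by
  constructor
  · refine .single (Or.inl ⟨hQ, hS, vmap x0 x1, Or.inl ⟨x0, x1, hx, h, rfl⟩, ?_⟩)
    rw [vmap_image, he]
  · refine .single (Or.inl ⟨diag_trp hQ, diag_trp hS, hmap x0 x1,
      Or.inr ⟨x0, x1, ?_, ?_, rfl⟩, ?_⟩)
    · obtain ⟨p, hp, e⟩ := hx
      exact ⟨(p.2, p.1), (mem_trp _ _ _).2 hp, e⟩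
    · rcases h with h | h
      · exact Or.inl ⟨fun p hp => h.1 _ (swap_mem_trp.1 hp),
          fun p hp => h.2 _ (swap_mem_trp.1 hp)⟩
      · exact Or.inr ⟨fun p hp => h.1 _ (swap_mem_trp.1 hp),
          fun p hp => h.2 _ (swap_mem_trp.1 hp)⟩
    · rw [hmap_image, he]

lemma cyc_JJ {Q : Finset Pt} (hQ : IsDiagram Q) (x0 x1 : ℝ)
    (hx : ∃ p ∈ Q, p.1 = x0) (h1 : ∀ p ∈ Q, x0 ≤ p.1)
    (h2 : ∀ p ∈ Q, p.1 ≠ x0 → p.1 < x1) :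
    JJ Q (cmv (mvf x0 x1) Q) ∧ IsDiagram (cmv (mvf x0 x1) Q) := by
  have hS : IsDiagram (cmv (mvf x0 x1) Q) := by
    apply diag_image hQ
    intro p hp q hq e
    have := h2 p hp
    have := h2 q hq
    simp only [mvf] at e
    grind
  refine ⟨?_, hS⟩
  have A := cyc_EE hQ hS x0 x1 rfl hx (Or.inl ⟨h1, h2⟩)
  have B := cyc_EE hS hQ x1 x0 ?_ ?_ (Or.inr ⟨?_, ?_⟩)
  · exact ⟨⟨A.1, B.1⟩, A.2, B.2⟩
  · rw [cmv_cmv, cmv_id]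
    intro p hp
    have := h2 p hp
    simp only [mvf]
    grind
  · obtain ⟨p, hp, e⟩ := hx
    exact ⟨(x1, p.2), (mem_cmv _ _ _ _).2 ⟨p.1, hp, by simp [mvf, e]⟩, rfl⟩
  · rintro ⟨a, b⟩ hp
    obtain ⟨c, hc, rfl⟩ := (mem_cmv _ _ _ _).1 hp
    have := h2 _ hc
    simp only [mvf] at *
    grind
  · rintro ⟨a, b⟩ hp
    obtain ⟨c, hc, rfl⟩ := (mem_cmv _ _ _ _).1 hp
    have := h1 _ hc
    simp only [mvf] at *
    grind

lemma swap_EE {Q S : Finset Pt} (hQ : IsDiagram Q) (hS : IsDiagram S) (x1 x2 : ℝ)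
    (he : S = cmv (swf x1 x2) Q) (hne : x1 ≠ x2) (hx1 : ∃ p ∈ Q, p.1 = x1)
    (hx2 : ∃ p ∈ Q, p.1 = x2)
    (h3 : ∀ p ∈ Q, ¬ (min x1 x2 < p.1 ∧ p.1 < max x1 x2))
    (h4 : ∀ p ∈ Q, ∀ q ∈ Q, p.1 = x1 → q.1 = x2 → p.2 ≠ q.2)
    (h5 : NoInterleaveV Q x1 x2) :
    EE Q S ∧ EE (trp Q) (trp S) := by
  constructor
  · refine .single (Or.inr ⟨hQ, hS, swapv x1 x2, Or.inl ⟨x1, x2, hne, hx1, hx2, h3, h4, h5, rfl⟩, ?_⟩)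
    rw [swapv_image, he]
  · refine .single (Or.inr ⟨diag_trp hQ, diag_trp hS, swaph x1 x2,
      Or.inr ⟨x1, x2, hne, ?_, ?_, ?_, ?_, ?_, rfl⟩, ?_⟩)
    · obtain ⟨p, hp, e⟩ := hx1
      exact ⟨(p.2, p.1), (mem_trp _ _ _).2 hp, e⟩
    · obtain ⟨p, hp, e⟩ := hx2
      exact ⟨(p.2, p.1), (mem_trp _ _ _).2 hp, e⟩
    · exact fun p hp => h3 _ (swap_mem_trp.1 hp)
    · exact fun p hp q hq => h4 _ (swap_mem_trp.1 hp) _ (swap_mem_trp.1 hq)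
    · exact fun p hp p' hp' q hq q' hq' => h5 _ (swap_mem_trp.1 hp) _ (swap_mem_trp.1 hp')
        _ (swap_mem_trp.1 hq) _ (swap_mem_trp.1 hq')
    · rw [swaph_image, he]

lemma swf_inj (a b : ℝ) {s t : ℝ} (h : swf a b s = swf a b t) : s = t := by
  simp only [swf] at h
  grind

lemma swap_JJ {Q : Finset Pt} (hQ : IsDiagram Q) (x1 x2 : ℝ) (hne : x1 < x2)
    (hx1 : ∃ p ∈ Q, p.1 = x1) (hx2 : ∃ p ∈ Q, p.1 = x2)
    (h3 : ∀ p ∈ Q, ¬ (x1 < p.1 ∧ p.1 < x2))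
    (h4 : ∀ p ∈ Q, ∀ q ∈ Q, p.1 = x1 → q.1 = x2 → p.2 ≠ q.2)
    (h5 : NoInterleaveV Q x1 x2) :
    JJ Q (cmv (swf x1 x2) Q) ∧ IsDiagram (cmv (swf x1 x2) Q) := by
  have hS : IsDiagram (cmv (swf x1 x2) Q) := diag_image hQ fun p _ q _ e => swf_inj _ _ e
  refine ⟨?_, hS⟩
  have e1 : ∀ c, swf x1 x2 c = x1 → c = x2 := by
    intro c
    simp only [swf]
    grind
  have e2 : ∀ c, swf x1 x2 c = x2 → c = x1 := by
    intro c
    simp only [swf]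
    grind
  have A := swap_EE hQ hS x1 x2 rfl hne.ne hx1 hx2
    (by rw [min_eq_left hne.le, max_eq_right hne.le]; exact h3) h4 h5
  have B := swap_EE hS hQ x1 x2 ?_ hne.ne ?_ ?_ ?_ ?_ ?_
  · exact ⟨⟨A.1, B.1⟩, A.2, B.2⟩
  · rw [cmv_cmv, cmv_id]
    intro p hp
    simp only [swf]
    grind
  · obtain ⟨p, hp, e⟩ := hx2
    exact ⟨(x1, p.2), (mem_cmv _ _ _ _).2 ⟨p.1, hp, by simp [swf, e]⟩, rfl⟩
  · obtain ⟨p, hp, e⟩ := hx1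
    exact ⟨(x2, p.2), (mem_cmv _ _ _ _).2 ⟨p.1, hp, by simp [swf, e]⟩, rfl⟩
  · rintro ⟨a, b⟩ hp
    obtain ⟨c, hc, rfl⟩ := (mem_cmv _ _ _ _).1 hp
    have := h3 _ hc
    rw [min_eq_left hne.le, max_eq_right hne.le]
    simp only [swf] at *
    grind
  · rintro ⟨a, b⟩ hp ⟨a', b'⟩ hp' k k'
    obtain ⟨c, hc, rfl⟩ := (mem_cmv _ _ _ _).1 hp
    obtain ⟨c', hc', rfl⟩ := (mem_cmv _ _ _ _).1 hp'
    exact (h4 _ hc' _ hc (e2 _ k') (e1 _ k)).symm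
  · rintro ⟨a, b⟩ hp ⟨a', b'⟩ hp' ⟨d, r⟩ hq ⟨d', r'⟩ hq' k k' l l'
    obtain ⟨c, hc, rfl⟩ := (mem_cmv _ _ _ _).1 hp
    obtain ⟨c', hc', rfl⟩ := (mem_cmv _ _ _ _).1 hp'
    obtain ⟨f, hf, rfl⟩ := (mem_cmv _ _ _ _).1 hq
    obtain ⟨f', hf', rfl⟩ := (mem_cmv _ _ _ _).1 hq'
    have := h5 _ hf _ hf' _ hc _ hc' (e2 _ l) (e2 _ l') (e1 _ k) (e1 _ k')
    exact fun hh => this hh.symm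

/-- moving all columns to the right -/
lemma far_JJ {Q : Finset Pt} (hQ : IsDiagram Q) (f h : ℝ → ℝ)
    (hf : ∀ p ∈ Q, ∀ q ∈ Q, p.1 < q.1 → f p.1 < f q.1)
    (hh : ∀ p ∈ Q, ∀ q ∈ Q, p.1 < q.1 → h p.1 < h q.1)
    (hfh : ∀ p ∈ Q, ∀ q ∈ Q, f p.1 < h q.1) : JJ (cmv f Q) (cmv h Q) := by
  have key : ∀ s : Finset ℝ, s ⊆ Q.image Prod.fst →
      (∀ p ∈ Q, ∀ b ∈ s, p.1 < b → p.1 ∈ s) →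
      JJ (cmv f Q) (cmv (fun t => if t ∈ s then h t else f t) Q) ∧
      IsDiagram (cmv (fun t => if t ∈ s then h t else f t) Q) := by
    intro s
    induction s using Finset.induction_on_max with
    | empty =>
      intro _ _
      have : cmv (fun t => if t ∈ (∅ : Finset ℝ) then h t else f t) Q = cmv f Q :=
        cmv_congr (by simp)
      rw [this]
      refine ⟨.refl _, diag_image hQ ?_⟩
      intro p hp q hq e
      have := hf p hp q hq
      have := hf q hq p hp
      grind
    | insert a s has ih =>
      intro hsub hlow
      obtain ⟨j, d⟩ := ih (fun b hb => hsub (Finset.mem_insert_of_mem hb)) (by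
        intro p hp b hb hlt
        have h1 := hlow p hp b (Finset.mem_insert_of_mem hb) hlt
        have := has b hb
        rcases Finset.mem_insert.1 h1 with h1 | h1
        · linarith
        · exact h1)
      have hans : a ∉ s := fun hh => lt_irrefl _ (has a hh)
      obtain ⟨pa, hpa, rfl⟩ := Finset.mem_image.1 (hsub (Finset.mem_insert_self _ _))
      have hrest : ∀ p ∈ Q, p.1 ∉ s → p.1 ≠ pa.1 → pa.1 < p.1 := by
        intro p hp hps hne
        by_contra hlt
        have := hlow p hp pa.1 (Finset.mem_insert_self _ _) (lt_of_le_of_ne (not_lt.1 hlt) hne)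
        rcases Finset.mem_insert.1 this with h1 | h1
        · exact hne h1
        · exact hps h1
      have C := cyc_JJ d (f pa.1) (h pa.1) ?_ ?_ ?_
      · have E : cmv (mvf (f pa.1) (h pa.1)) (cmv (fun t => if t ∈ s then h t else f t) Q)
            = cmv (fun t => if t ∈ insert pa.1 s then h t else f t) Q := by
          rw [cmv_cmv]
          apply cmv_congr
          intro p hp
          by_cases h1 : p.1 ∈ s
          · have := hfh pa hpa p hp
            simp [mvf, h1, this.ne']
          · by_cases h2 : p.1 = pa.1
            · simp [mvf, h2, hans]
            · have := hf pa hpa p hp (hrest p hp h1 h2)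
              simp [mvf, h1, h2, this.ne']
        rw [E] at C
        exact ⟨j.trans C.1, C.2⟩
      · exact ⟨(f pa.1, pa.2), (mem_cmv _ _ _ _).2 ⟨pa.1, hpa, by simp [hans]⟩, rfl⟩
      · rintro ⟨u, w⟩ hp
        obtain ⟨c, hc, rfl⟩ := (mem_cmv _ _ _ _).1 hp
        by_cases h1 : c ∈ s
        · simp only [h1, if_true]
          exact (hfh pa hpa _ hc).le
        · simp only [h1, if_false]
          by_cases h2 : c = pa.1
          · rw [h2]
          · exact (hf pa hpa _ hc (hrest _ hc h1 h2)).le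
      · rintro ⟨u, w⟩ hp hne
        obtain ⟨c, hc, rfl⟩ := (mem_cmv _ _ _ _).1 hp
        by_cases h1 : c ∈ s
        · simp only [h1, if_true]
          exact hh _ hc _ hpa (has _ h1)
        · simp only [h1, if_false]
          exact hfh _ hc _ hpa
  have := (key (Q.image Prod.fst) subset_rfl
    (fun p hp _ _ _ => Finset.mem_image_of_mem _ hp)).1
  have E : cmv (fun t => if t ∈ Q.image Prod.fst then h t else f t) Q = cmv h Q := by
    apply cmv_congr
    intro p hp
    rw [if_pos (Finset.mem_image_of_mem _ hp)]
  rwa [E] at this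

lemma exists_bd (A : Finset ℝ) : ∃ M : ℝ, ∀ a ∈ A, |a| < M := by
  induction A using Finset.induction_on with
  | empty => exact ⟨0, by simp⟩
  | insert a s _ ih =>
    obtain ⟨M, hM⟩ := ih
    refine ⟨max M (|a| + 1), ?_⟩
    intro b hb
    rcases Finset.mem_insert.1 hb with rfl | hb
    · exact lt_of_lt_of_le (by linarith) (le_max_right _ _)
    · exact lt_of_lt_of_le (hM b hb) (le_max_left _ _)

/-- order preserving relabelling -/
lemma mono_JJ {Q : Finset Pt} (hQ : IsDiagram Q) (f : ℝ → ℝ)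
    (hf : ∀ p ∈ Q, ∀ q ∈ Q, p.1 < q.1 → f p.1 < f q.1) : JJ Q (cmv f Q) := by
  obtain ⟨M, hM⟩ := exists_bd (Q.image Prod.fst)
  obtain ⟨N, hN⟩ := exists_bd ((cmv f Q).image Prod.fst)
  have h1 : ∀ p ∈ Q, |p.1| < M := fun p hp => hM _ (Finset.mem_image_of_mem _ hp)
  have h2 : ∀ p ∈ Q, |f p.1| < N := fun p hp =>
    hN _ (Finset.mem_image.2 ⟨(f p.1, p.2), (mem_cmv _ _ _ _).2 ⟨p.1, hp, rfl⟩, rfl⟩)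
  have h3 : ∀ p ∈ Q, 0 < M := fun p hp => lt_of_le_of_lt (abs_nonneg _) (h1 p hp)
  have h4 : ∀ p ∈ Q, 0 < N := fun p hp => lt_of_le_of_lt (abs_nonneg _) (h2 p hp)
  have a := far_JJ hQ (fun t => t) (fun t => t + (2 * M + N)) (fun _ _ _ _ h => h)
    (fun _ _ _ _ h => by linarith) (fun p hp q hq => by
      have := abs_lt.1 (h1 p hp); have := abs_lt.1 (h1 q hq); have := h4 p hp; linarith)
  have b := far_JJ hQ f (fun t => t + (2 * M + N)) hf
    (fun _ _ _ _ h => by linarith) (fun p hp q hq => by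
      have := abs_lt.1 (h2 p hp); have := abs_lt.1 (h1 q hq); have := h3 p hp; linarith)
  rw [cmv_id (by simp)] at a
  exact a.trans b.symm

lemma mvf_diag {Q : Finset Pt} (hQ : IsDiagram Q) {s z : ℝ} (hz : ∀ p ∈ Q, p.1 ≠ z) :
    IsDiagram (cmv (mvf s z) Q) := by
  apply diag_image hQ
  intro p hp q hq e
  have := hz p hp
  have := hz q hq
  simp only [mvf] at e
  grind

lemma slide_JJ (y1 y2 : ℝ) (n : ℕ) : ∀ (Q : Finset Pt) (_ : IsDiagram Q) (s z : ℝ)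
    (_ : ((Q.image Prod.fst).filter (fun c => s < c ∧ c < z)).card ≤ n)
    (_ : ∃ p ∈ Q, p.1 = s)
    (_ : ∀ p ∈ Q, p.1 = s → p.2 = y1 ∨ p.2 = y2)
    (_ : ∀ p ∈ Q, ¬ (min y1 y2 < p.2 ∧ p.2 < max y1 y2))
    (_ : ∀ p ∈ Q, p.1 ≠ z) (_ : s < z)
    (_ : ∀ p ∈ Q, s < p.1 → p.1 < z → p.2 ≠ y1 ∧ p.2 ≠ y2),
    JJ Q (cmv (mvf s z) Q) := by
  induction n with
  | zero =>
    intro Q hQ s z hn hs hcol hadj hz hsz hav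
    apply mono_JJ hQ
    intro p hp q hq hpq
    have h0 : ∀ p ∈ Q, ¬ (s < p.1 ∧ p.1 < z) := by
      intro p hp hh
      have : p.1 ∈ (Q.image Prod.fst).filter (fun c => s < c ∧ c < z) :=
        Finset.mem_filter.2 ⟨Finset.mem_image_of_mem _ hp, hh⟩
      rw [Finset.card_eq_zero.1 (Nat.le_zero.1 hn)] at this
      simp at this
    have := h0 p hp
    have := h0 q hq
    have := hz p hp
    have := hz q hq
    simp only [mvf]
    grind
  | succ n ih =>
    intro Q hQ s z hn hs hcol hadj hz hsz hav
    by_cases hne : ((Q.image Prod.fst).filter (fun c => s < c ∧ c < z)).Nonempty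
    swap
    · refine ih Q hQ s z ?_ hs hcol hadj hz hsz hav
      rw [Finset.not_nonempty_iff_eq_empty.1 hne]
      simp
    obtain ⟨c, hc, hmin⟩ := Finset.exists_min_image _ (fun c => c) hne
    obtain ⟨hc1, hsc, hcz⟩ := Finset.mem_filter.1 hc
    obtain ⟨pc, hpc, rfl⟩ := Finset.mem_image.1 hc1
    have hbet : ∀ p ∈ Q, ¬ (s < p.1 ∧ p.1 < pc.1) := by
      intro p hp hh
      have := hmin p.1 (Finset.mem_filter.2 ⟨Finset.mem_image_of_mem _ hp, hh.1, hh.2.trans hcz⟩)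
      linarith [hh.2]
    obtain ⟨J1, D1⟩ := swap_JJ hQ s pc.1 hsc hs ⟨pc, hpc, rfl⟩ hbet
      (by
        intro p hp q hq h1 h2 h3
        have := hav q hq (by rw [h2]; exact hsc) (by rw [h2]; exact hcz)
        have := hcol p hp h1
        grind)
      (by
        intro p hp p' hp' q hq q' hq' h1 h2 h3 h4
        have a1 := hcol p hp h1
        have a2 := hcol p' hp' h2
        have a3 := hav q hq (by rw [h3]; exact hsc) (by rw [h3]; exact hcz)
        have a4 := hav q' hq' (by rw [h4]; exact hsc) (by rw [h4]; exact hcz)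
        have a5 := hadj q hq
        have a6 := hadj q' hq'
        rcases le_total y1 y2 with hl | hl
        · rw [min_eq_left hl, max_eq_right hl] at a5 a6
          grind
        · rw [min_eq_right hl, max_eq_left hl] at a5 a6
          grind)
    set Q1 := cmv (swf s pc.1) Q with hQ1
    have mem1 : ∀ p ∈ Q1, ∃ q ∈ Q, p.2 = q.2 ∧ p.1 = swf s pc.1 q.1 := by
      rintro ⟨a, b⟩ hp
      obtain ⟨c, hc, rfl⟩ := (mem_cmv _ _ _ _).1 hp
      exact ⟨_, hc, rfl, rfl⟩
    have J2 : JJ Q1 (cmv (mvf pc.1 z) Q1) := by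
      apply ih Q1 D1 pc.1 z
      · have hlt : (Q1.image Prod.fst).filter (fun c => pc.1 < c ∧ c < z) ⊂
            (Q.image Prod.fst).filter (fun c => s < c ∧ c < z) := by
          refine Finset.ssubset_iff_subset_ne.2 ⟨?_, ?_⟩
          · intro a ha
            obtain ⟨ha1, ha2, ha3⟩ := Finset.mem_filter.1 ha
            obtain ⟨p, hp, rfl⟩ := Finset.mem_image.1 ha1
            obtain ⟨q, hq, e1, e2⟩ := mem1 p hp
            refine Finset.mem_filter.2 ⟨?_, hsc.trans ha2, ha3⟩
            have : p.1 = q.1 := by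
              simp only [swf] at e2
              grind
            rw [this]
            exact Finset.mem_image_of_mem _ hq
          · intro he
            rw [← he] at hc
            exact lt_irrefl _ (Finset.mem_filter.1 hc).2.1
        have := Finset.card_lt_card hlt
        omega
      · obtain ⟨p, hp, e⟩ := hs
        exact ⟨(pc.1, p.2), (mem_cmv _ _ _ _).2 ⟨p.1, hp, by simp [swf, e]⟩, rfl⟩
      · intro p hp e
        obtain ⟨q, hq, e1, e2⟩ := mem1 p hp
        rw [e1]
        apply hcol q hq
        simp only [swf] at e2
        grind
      · intro p hp
        obtain ⟨q, hq, e1, e2⟩ := mem1 p hp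
        rw [e1]
        exact hadj q hq
      · intro p hp
        obtain ⟨q, hq, e1, e2⟩ := mem1 p hp
        have := hz q hq
        simp only [swf] at e2
        grind
      · exact hcz
      · intro p hp l1 l2
        obtain ⟨q, hq, e1, e2⟩ := mem1 p hp
        rw [e1]
        have : p.1 = q.1 := by
          simp only [swf] at e2
          grind
        apply hav q hq <;> linarith
    have J3 : JJ (cmv (mvf pc.1 z) Q1) (cmv (mvf s pc.1) (cmv (mvf pc.1 z) Q1)) := by
      apply mono_JJ
      · apply mvf_diag D1
        intro p hp
        obtain ⟨q, hq, e1, e2⟩ := mem1 p hp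
        have := hz q hq
        simp only [swf] at e2
        grind
      · have aux : ∀ p ∈ cmv (mvf pc.1 z) Q1, ¬ (s < p.1 ∧ p.1 ≤ pc.1) := by
          rintro ⟨a, b⟩ hp
          obtain ⟨c, hc, rfl⟩ := (mem_cmv _ _ _ _).1 hp
          obtain ⟨q, hq, e1, e2⟩ := mem1 _ hc
          have := hbet q hq
          simp only [swf, mvf] at *
          grind
        intro p hp q hq hlt
        have := aux p hp
        have := aux q hq
        simp only [mvf]
        grind
    have E : cmv (mvf s pc.1) (cmv (mvf pc.1 z) Q1) = cmv (mvf s z) Q := by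
      rw [hQ1, cmv_cmv, cmv_cmv]
      apply cmv_congr
      intro p hp
      simp only [swf, mvf]
      grind
    rw [E] at J3
    exact (J1.trans J2).trans J3

lemma two_of_card {A : Finset Pt} (h : A.card = 2) {a b c : Pt} (ha : a ∈ A) (hb : b ∈ A)
    (hc : c ∈ A) (hab : a ≠ b) : c = a ∨ c = b := by
  by_contra hh
  push Not at hh
  have : ({a, b, c} : Finset Pt).card = 3 := by
    rw [Finset.card_eq_three]
    exact ⟨a, b, c, hab, hh.1.symm, hh.2.symm, rfl⟩
  have h2 : ({a, b, c} : Finset Pt) ⊆ A := by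
    intro d hd
    simp only [Finset.mem_insert, Finset.mem_singleton] at hd
    rcases hd with rfl | rfl | rfl <;> assumption
  have := Finset.card_le_card h2
  omega

lemma row_two {R : Finset Pt} (hR : IsDiagram R) {x xb y c : ℝ} (h1 : (x, y) ∈ R)
    (h2 : (xb, y) ∈ R) (hne : x ≠ xb) (hc : (c, y) ∈ R) : c = x ∨ c = xb := by
  have h := (hR _ h1).2
  have := two_of_card h (a := (x, y)) (b := (xb, y)) (c := (c, y)) (by simp [h1]) (by simp [h2])
    (by simp [hc]) (by simp [hne])
  simpa using this

lemma mem_stab (x y x' y' : ℝ) (R : Finset Pt) (a b : ℝ) : (a, b) ∈ stabSet x y x' y' R ↔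
    (a = x' ∧ b = y) ∨ (a = x ∧ b = y') ∨ (a = x' ∧ b = y') ∨ ((a, b) ∈ R ∧ ¬ (a = x ∧ b = y)) := by
  simp only [stabSet, Finset.mem_insert, Finset.mem_erase, Prod.mk.injEq, ne_eq]
  tauto

def gf (y y' y'' : ℝ) : ℝ → ℝ := fun r => if r = y' then y else if r = y then y'' else r

lemma stab_eq {R : Finset Pt} (hR : IsDiagram R) {x xb y x' y' x'' y'' : ℝ} {R' R'' : Finset Pt}
    (hne : x ≠ xb) (h : StabData x y x' y' R R') (h2 : StabData xb y x'' y'' R R'') :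
    R'' = trp (cmv (gf y y' y'') (trp (cmv (mvf x' x'') R'))) := by
  obtain ⟨hv, hxx, hyy, hx', hy', -, -, rfl⟩ := h
  obtain ⟨hv2, hxx2, hyy2, hx2, hy2, -, -, rfl⟩ := h2
  have hx'r : ∀ a b, (a, b) ∈ R → a ≠ x' := fun a b h => hx' _ h
  have hy'r : ∀ a b, (a, b) ∈ R → b ≠ y' := fun a b h => hy' _ h
  have hrow : ∀ c, (c, y) ∈ R → c = x ∨ c = xb := fun c hc => row_two hR hv hv2 hne hc
  have := hx'r _ _ hv2
  ext ⟨a, b⟩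
  rw [mem_trp, mem_cmv, mem_stab]
  simp only [mem_trp, mem_cmv, mem_stab]
  constructor
  · rintro (⟨rfl, rfl⟩ | ⟨rfl, rfl⟩ | ⟨rfl, rfl⟩ | ⟨h1, h2⟩)
    · exact ⟨y', ⟨x', by simp, by simp [mvf]⟩, by simp [gf]⟩
    · exact ⟨y, ⟨a, by simp [hv2, hne.symm], by simp [mvf, this]⟩, by simp [gf, hyy]⟩
    · exact ⟨y, ⟨x', by simp, by simp [mvf]⟩, by simp [gf, hyy]⟩
    · by_cases hb : b = y
      · subst hb
        have : a = x := by
          have := hrow a h1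
          tauto
        subst this
        exact ⟨y', ⟨a, by simp, by simp [mvf, hxx]⟩, by simp [gf]⟩
      · exact ⟨b, ⟨a, by simp [h1, hb], by simp [mvf, hx'r _ _ h1]⟩, by simp [gf, hb, hy'r _ _ h1]⟩
  · rintro ⟨r, ⟨c, hc, rfl⟩, rfl⟩
    rcases hc with ⟨rfl, rfl⟩ | ⟨rfl, rfl⟩ | ⟨rfl, rfl⟩ | ⟨h1, h2⟩
    · simp [mvf, gf, hyy]
    · simp [mvf, gf, hxx, hv, hne]
    · simp [mvf, gf]
    · by_cases hb : r = y
      · subst hb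
        have := hrow c h1
        have : c = xb := by tauto
        subst this
        simp [mvf, gf, hyy, hx'r _ _ h1]
      · simp [mvf, gf, hx'r _ _ h1, hy'r _ _ h1, hb, h1]

lemma stab_diag {R : Finset Pt} (hR : IsDiagram R) {x xb y x' y' x'' y'' : ℝ} {R' R'' : Finset Pt}
    (hR' : IsDiagram R')
    (hne : x ≠ xb) (h : StabData x y x' y' R R') (h2 : StabData xb y x'' y'' R R'')
    (hs : 0 < (y - y') * (y'' - y)) : IsDiagram R'' := by
  rw [stab_eq hR hne h h2]
  obtain ⟨hv, hxx, hyy, hx', hy', -, -, rfl⟩ := h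
  obtain ⟨hv2, hxx2, hyy2, hx2, hy2, -, -, rfl⟩ := h2
  have hx'r : ∀ a b, (a, b) ∈ R → a ≠ x'' := fun a b h => hx2 _ h
  have hy'r : ∀ a b, (a, b) ∈ R → b ≠ y'' := fun a b h => hy2 _ h
  have hyy3 : y'' ≠ y' := by
    rintro rfl
    nlinarith [sq_nonneg (y - y'')]
  apply diag_trp
  apply diag_image
  · apply diag_trp
    apply diag_image hR'
    rintro ⟨a, b⟩ hp ⟨a', b'⟩ hq e
    rw [mem_stab] at hp hq
    have := hx'r a b
    have := hx'r a' b'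
    have := hx'r _ _ hv
    simp only [mvf] at e ⊢
    grind
  · have aux : ∀ p ∈ trp (cmv (mvf x' x'') (stabSet x y x' y' R)), p.1 ≠ y'' := by
      rintro ⟨a, b⟩ hp
      simp only [mem_trp, mem_cmv, mem_stab] at hp
      obtain ⟨c, hc, rfl⟩ := hp
      have := hy'r c a
      grind
    intro p hp q hq e
    have := aux p hp
    have := aux q hq
    simp only [gf] at e
    grind

lemma gf_mono {y y' y'' r t : ℝ} (hyy : y ≠ y') (hs : 0 < (y - y') * (y'' - y))
    (a1 : r = y ∨ r = y' ∨ (r ≠ y ∧ r ≠ y' ∧ r ≠ y'' ∧ ¬ (min y y' < r ∧ r < max y y') ∧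
          ¬ (min y y'' < r ∧ r < max y y'')))
    (a2 : t = y ∨ t = y' ∨ (t ≠ y ∧ t ≠ y' ∧ t ≠ y'' ∧ ¬ (min y y' < t ∧ t < max y y') ∧
          ¬ (min y y'' < t ∧ t < max y y''))) (hlt : r < t) : gf y y' y'' r < gf y y' y'' t := by
  simp only [gf]
  rcases lt_or_gt_of_ne hyy with hh | hh
  · have : y'' < y := by
      by_contra hc
      push Not at hc
      nlinarith
    rw [min_eq_left hh.le, max_eq_right hh.le, min_eq_right this.le, max_eq_left this.le] at a1 a2
    clear hs
    have b1 : r = y ∨ r = y' ∨ r < y'' ∨ y' < r := by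
      clear a2
      grind
    have b2 : t = y ∨ t = y' ∨ t < y'' ∨ y' < t := by
      clear a1 b1
      grind
    clear a1 a2
    split_ifs <;> grind
  · have : y < y'' := by
      by_contra hc
      push Not at hc
      nlinarith
    rw [min_eq_right hh.le, max_eq_left hh.le, min_eq_left this.le, max_eq_right this.le] at a1 a2
    clear hs
    have b1 : r = y ∨ r = y' ∨ r < y' ∨ y'' < r := by
      clear a2
      grind
    have b2 : t = y ∨ t = y' ∨ t < y' ∨ y'' < t := by
      clear a1 b1
      grind
    clear a1 a2
    split_ifs <;> grind

set_option maxHeartbeats 1000000 in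
lemma stab_JJ {R : Finset Pt} (hR : IsDiagram R) {x xb y x' y' x'' y'' : ℝ} {R' R'' : Finset Pt}
    (hR' : IsDiagram R')
    (hne : x ≠ xb) (h : StabData x y x' y' R R') (h2 : StabData xb y x'' y'' R R'')
    (hs : 0 < (y - y') * (y'' - y)) (hl : x < x') (hl2 : x'' < xb) : JJ R' R'' := by
  rw [stab_eq hR hne h h2]
  have h' := h
  obtain ⟨hv, hxx, hyy, hx', hy', hbx, hby, -⟩ := h
  obtain ⟨hv2, hxx2, hyy2, hx2, hy2, hbx2, hby2, -⟩ := h2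
  have m1 : ∀ a b, (a, b) ∈ R' ↔ (a = x' ∧ b = y) ∨ (a = x ∧ b = y') ∨ (a = x' ∧ b = y') ∨
      ((a, b) ∈ R ∧ ¬ (a = x ∧ b = y)) := by
    intro a b
    rw [h'.2.2.2.2.2.2.2, mem_stab]
  clear h'
  rw [min_eq_left hl.le, max_eq_right hl.le] at hbx
  rw [min_eq_right hl2.le, max_eq_left hl2.le] at hbx2
  have hx'r : ∀ a b, (a, b) ∈ R → a ≠ x'' := fun a b h => hx2 _ h
  have hy'r : ∀ a b, (a, b) ∈ R → b ≠ y'' := fun a b h => hy2 _ h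
  have hx1r : ∀ a b, (a, b) ∈ R → a ≠ x' := fun a b h => hx' _ h
  have hy1r : ∀ a b, (a, b) ∈ R → b ≠ y' := fun a b h => hy' _ h
  have hbxr : ∀ a b, (a, b) ∈ R → ¬ (x < a ∧ a < x') := fun a b h => hbx _ h
  have hbxr2 : ∀ a b, (a, b) ∈ R → ¬ (x'' < a ∧ a < xb) := fun a b h => hbx2 _ h
  have hbyr : ∀ a b, (a, b) ∈ R → ¬ (min y y' < b ∧ b < max y y') := fun a b h => hby _ h
  have hbyr2 : ∀ a b, (a, b) ∈ R → ¬ (min y y'' < b ∧ b < max y y'') := fun a b h => hby2 _ h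
  have hrow : ∀ c, (c, y) ∈ R → c = x ∨ c = xb := fun c hc => row_two hR hv hv2 hne hc
  -- the column
  have cs : ∃ p ∈ R', p.1 = x' := ⟨(x', y), by simp [m1], rfl⟩
  have ccol : ∀ p ∈ R', p.1 = x' → p.2 = y ∨ p.2 = y' := by
    rintro ⟨a, b⟩ hp e
    rw [m1] at hp
    have := hx1r a b
    grind
  have cadj : ∀ p ∈ R', ¬ (min y y' < p.2 ∧ p.2 < max y y') := by
    rintro ⟨a, b⟩ hp e
    rw [m1] at hp
    have := hbyr a b
    grind
  have cav : ∀ p ∈ R', p.1 ≠ x → p.1 ≠ x' → p.1 ≠ xb → p.2 ≠ y ∧ p.2 ≠ y' := by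
    rintro ⟨a, b⟩ hp
    rw [m1] at hp
    have := hy1r a b
    have := hrow a
    grind
  have part1 : JJ R' (cmv (mvf x' x'') R') ∧ IsDiagram (cmv (mvf x' x'') R') := by
    have hd : IsDiagram (cmv (mvf x' x'') R') := by
      apply diag_image hR'
      rintro ⟨a, b⟩ hp ⟨a', b'⟩ hq e
      rw [m1] at hp hq
      have := hx'r a b
      have := hx'r a' b'
      have := hx'r _ _ hv
      simp only [mvf] at e ⊢
      grind
    refine ⟨?_, hd⟩
    rcases lt_or_gt_of_ne hne with hlt | hgt
    · have b1 := hbxr _ _ hv2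
      have b2 := hx1r _ _ hv2
      have b3 : x' < xb := by grind
      have b4 := hbxr2 _ _ hv
      have b5 := hx'r _ _ hv
      have b6 : x < x'' := by grind
      rcases lt_or_ge x' x'' with hh | hh
      · apply slide_JJ y y' _ R' hR' x' x'' le_rfl cs ccol cadj _ hh
        · intro p hp h1 h2
          apply cav p hp <;> intro <;> linarith
        · rintro ⟨a, b⟩ hp
          rw [m1] at hp
          have := hx'r a b
          grind
      · apply mono_JJ hR'
        have aux : ∀ p ∈ R', p.1 ≠ x' → p.1 ≤ x ∨ x' < p.1 := by
          rintro ⟨a, b⟩ hp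
          rw [m1] at hp
          have := hbxr a b
          have := hx1r a b
          grind
        intro p hp q hq hlt
        have := aux p hp
        have := aux q hq
        simp only [mvf]
        grind
    · -- go around
      obtain ⟨M, hM⟩ := exists_bd (R'.image Prod.fst)
      have hM1 : ∀ p ∈ R', -M < p.1 ∧ p.1 < M := fun p hp =>
        abs_lt.1 (hM _ (Finset.mem_image_of_mem _ hp))
      have hM2 : x' < M := by
        obtain ⟨p, hp, e⟩ := cs
        rw [← e]
        exact (hM1 p hp).2
      obtain ⟨w, hw1, hw2⟩ : ∃ w, w < -M ∧ w < x'' :=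
        ⟨min (-M) x'' - 1, by linarith [min_le_left (-M) x''], by linarith [min_le_right (-M) x'']⟩
      have hxxM : x'' < M := by linarith
      have J1 : JJ R' (cmv (mvf x' M) R') := by
        apply slide_JJ y y' _ R' hR' x' M le_rfl cs ccol cadj _ hM2
        · intro p hp h1 h2
          apply cav p hp <;> intro <;> linarith
        · intro p hp
          exact (hM1 p hp).2.ne
      have DW : IsDiagram (cmv (mvf x' w) R') := by
        apply mvf_diag hR'
        intro p hp
        have := hM1 p hp
        exact (by linarith : w < p.1).ne'
      have memW : ∀ p ∈ cmv (mvf x' w) R', ∃ q ∈ R', p.2 = q.2 ∧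
          ((q.1 = x' ∧ p.1 = w) ∨ (q.1 ≠ x' ∧ p.1 = q.1)) := by
        rintro ⟨a, b⟩ hp
        obtain ⟨c, hc, rfl⟩ := (mem_cmv _ _ _ _).1 hp
        refine ⟨_, hc, rfl, ?_⟩
        simp only [mvf]
        grind
      have csW : ∃ p ∈ cmv (mvf x' w) R', p.1 = w :=
        ⟨(w, y), (mem_cmv _ _ _ _).2 ⟨x', by simp [m1], by simp [mvf]⟩, rfl⟩
      have J2 : JJ (cmv (mvf x' w) R') (cmv (mvf x' M) R') := by
        have := (cyc_JJ DW w M csW ?_ ?_).1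
        · rw [cmv_cmv] at this
          rwa [cmv_congr (g := mvf x' M) (f := fun t => mvf w M (mvf x' w t))] at this
          intro p hp
          have := hM1 p hp
          simp only [mvf]
          grind
        · intro p hp
          obtain ⟨q, hq, e1, e2⟩ := memW p hp
          have := hM1 q hq
          grind
        · intro p hp hn
          obtain ⟨q, hq, e1, e2⟩ := memW p hp
          have := hM1 q hq
          grind
      have J3 : JJ (cmv (mvf x' w) R') (cmv (mvf x' x'') R') := by
        have := slide_JJ y y' _ _ DW w x'' le_rfl csW ?_ ?_ ?_ hw2 ?_
        · rw [cmv_cmv] at this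
          rwa [cmv_congr (g := mvf x' x'') (f := fun t => mvf w x'' (mvf x' w t))] at this
          intro p hp
          have := hM1 p hp
          simp only [mvf]
          grind
        · intro p hp e
          obtain ⟨q, hq, e1, e2⟩ := memW p hp
          have := hM1 q hq
          rw [e1]
          apply ccol q hq
          grind
        · intro p hp
          obtain ⟨q, hq, e1, e2⟩ := memW p hp
          rw [e1]
          exact cadj q hq
        · intro p hp
          obtain ⟨⟨a, b⟩, hq, e1, e2⟩ := memW p hp
          rw [m1] at hq
          have := hx'r a b
          have := hx'r _ _ hv
          grind
        · intro p hp h1 h2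
          obtain ⟨q, hq, e1, e2⟩ := memW p hp
          rw [e1]
          apply cav q hq <;> grind
      exact (J1.trans J2.symm).trans J3
  refine part1.1.trans ?_
  have := (mono_JJ (diag_trp part1.2) (gf y y' y'') ?_).tr
  · rwa [trp_trp] at this
  · have aux : ∀ p ∈ trp (cmv (mvf x' x'') R'), p.1 = y ∨ p.1 = y' ∨
        (p.1 ≠ y ∧ p.1 ≠ y' ∧ p.1 ≠ y'' ∧ ¬ (min y y' < p.1 ∧ p.1 < max y y') ∧
          ¬ (min y y'' < p.1 ∧ p.1 < max y y'')) := by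
      rintro ⟨a, b⟩ hp
      simp only [mem_trp, mem_cmv, m1] at hp
      obtain ⟨c, hc, rfl⟩ := hp
      have := hy'r c a
      have := hy1r c a
      have := hbyr c a
      have := hbyr2 c a
      grind
    intro p hp q hq hlt
    have a1 := aux p hp
    have a2 := aux q hq
    exact gf_mono hyy hs a1 a2 hlt

lemma exists_near (A : Finset ℝ) (b : ℝ) : ∃ e : ℝ, 0 < e ∧ ∀ a ∈ A, a = b ∨ e < |a - b| := by
  induction A using Finset.induction_on with
  | empty => exact ⟨1, one_pos, by simp⟩
  | insert a s _ ih =>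
    obtain ⟨e, he, h⟩ := ih
    by_cases hab : a = b
    · refine ⟨e, he, ?_⟩
      intro c hc
      rcases Finset.mem_insert.1 hc with rfl | hc
      · exact Or.inl hab
      · exact h c hc
    · have : 0 < |a - b| := abs_pos.2 (sub_ne_zero.2 hab)
      refine ⟨min e (|a - b| / 2), lt_min he (by linarith), ?_⟩
      intro c hc
      rcases Finset.mem_insert.1 hc with rfl | hc
      · exact Or.inr (lt_of_le_of_lt (min_le_right _ _) (by linarith))
      · rcases h c hc with h | h
        · exact Or.inl h
        · exact Or.inr (lt_of_le_of_lt (min_le_left _ _) h)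

lemma exists_side (A : Finset ℝ) (b u : ℝ) (hu : u ≠ 0) : ∃ z : ℝ, 0 < u * (z - b) ∧ b ≠ z ∧
    (∀ a ∈ A, a ≠ z) ∧ ∀ a ∈ A, ¬ (min b z < a ∧ a < max b z) := by
  obtain ⟨e, he, h⟩ := exists_near A b
  have h' : ∀ a ∈ A, a = b ∨ a < b - e ∨ b + e < a := by
    intro a ha
    rcases h a ha with h | h
    · exact Or.inl h
    · rcases lt_abs.1 h with h | h
      · exact Or.inr (Or.inr (by linarith))
      · exact Or.inr (Or.inl (by linarith))
  rcases lt_or_gt_of_ne hu with hu | hu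
  · refine ⟨b - e, by nlinarith, by linarith, ?_, ?_⟩
    · intro a ha
      have := h' a ha
      grind
    · intro a ha
      rw [min_eq_right (by linarith), max_eq_left (by linarith)]
      have := h' a ha
      grind
  · refine ⟨b + e, by nlinarith, by linarith, ?_, ?_⟩
    · intro a ha
      have := h' a ha
      grind
    · intro a ha
      rw [min_eq_left (by linarith), max_eq_right (by linarith)]
      have := h' a ha
      grind

lemma stab_stepH {R : Finset Pt} (hR : IsDiagram R) {x xb y x' y' : ℝ} {R' : Finset Pt}
    (hR' : IsDiagram R') (hne : x ≠ xb) (h : StabData x y x' y' R R') (hb : (xb, y) ∈ R) :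
    ∃ x'' y'' R'', StabData xb y x'' y'' R R'' ∧ IsDiagram R'' ∧ JJ R' R'' ∧
      (0 < (x - x') * (y - y') ↔ 0 < (xb - x'') * (y - y'')) := by
  obtain ⟨x'', a1, a2, a3, a4⟩ := exists_side (R.image Prod.fst) xb (x - x') (sub_ne_zero.2 h.2.1)
  obtain ⟨y'', b1, b2, b3, b4⟩ := exists_side (R.image Prod.snd) y (y - y') (sub_ne_zero.2 h.2.2.1)
  have h2 : StabData xb y x'' y'' R (stabSet xb y x'' y'' R) :=
    ⟨hb, a2, b2, fun p hp => a3 _ (Finset.mem_image_of_mem _ hp),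
      fun p hp => b3 _ (Finset.mem_image_of_mem _ hp),
      fun p hp => a4 _ (Finset.mem_image_of_mem _ hp),
      fun p hp => b4 _ (Finset.mem_image_of_mem _ hp), rfl⟩
  have hd := stab_diag hR hR' hne h h2 b1
  refine ⟨x'', y'', _, h2, hd, ?_, ?_⟩
  · rcases lt_or_gt_of_ne h.2.1 with hl | hl
    · have : x'' < xb := by
        by_contra hc
        push Not at hc
        nlinarith
      exact stab_JJ hR hR' hne h h2 b1 hl this
    · have : xb < x'' := by
        by_contra hc
        push Not at hc
        nlinarith
      exact (stab_JJ hR hd hne.symm h2 h (by nlinarith) this hl).symm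
  · have key : 0 < ((x - x') * (y - y')) * ((xb - x'') * (y - y'')) := by
      have e : ((x - x') * (y - y')) * ((xb - x'') * (y - y'')) =
          ((x - x') * (x'' - xb)) * ((y - y') * (y'' - y)) := by ring
      rw [e]
      exact mul_pos a1 b1
    constructor
    · intro hh
      exact (mul_pos_iff_of_pos_left hh).1 key
    · intro hh
      exact (mul_pos_iff_of_pos_right hh).1 key

lemma stabData_trp {R : Finset Pt} {x y x' y' : ℝ} {R' : Finset Pt} (h : StabData x y x' y' R R') :
    StabData y x y' x' (trp R) (trp R') := by
  obtain ⟨h1, h2, h3, h4, h5, h6, h7, rfl⟩ := h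
  refine ⟨(mem_trp _ _ _).2 h1, h3, h2, fun p hp => h5 _ (swap_mem_trp.1 hp),
    fun p hp => h4 _ (swap_mem_trp.1 hp), fun p hp => h7 _ (swap_mem_trp.1 hp),
    fun p hp => h6 _ (swap_mem_trp.1 hp), ?_⟩
  ext ⟨a, b⟩
  simp only [mem_trp, mem_stab]
  tauto

lemma stab_stepV {R : Finset Pt} (hR : IsDiagram R) {x yb y x' y' : ℝ} {R' : Finset Pt}
    (hR' : IsDiagram R') (hne : y ≠ yb) (h : StabData x y x' y' R R') (hb : (x, yb) ∈ R) :
    ∃ x'' y'' R'', StabData x yb x'' y'' R R'' ∧ IsDiagram R'' ∧ JJ R' R'' ∧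
      (0 < (x - x') * (y - y') ↔ 0 < (x - x'') * (yb - y'')) := by
  obtain ⟨y'', x'', R'', k1, k2, k3, k4⟩ := stab_stepH (diag_trp hR) (diag_trp hR') hne
    (stabData_trp h) ((mem_trp _ _ _).2 hb)
  refine ⟨x'', y'', trp R'', ?_, diag_trp k2, ?_, ?_⟩
  · have := stabData_trp k1
    rwa [trp_trp] at this
  · have := k3.tr
    rwa [trp_trp] at this
  · rw [mul_comm (x - x'), mul_comm (x - x'')]
    exact k4

/-- **Lemma (the stabilization scene can be moved to any vertex of the component).**
If `R ↦ R'` is a stabilization at a vertex `v`, and `P` is any vertex of the connected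
component of `R` containing `v`, then there is a stabilization `R ↦ R''` of the same type
occurring in a small neighborhood of `P` such that `R'` and `R''` are connected by a finite
sequence of commutations and cyclic permutations. -/
theorem stabilization_at_any_vertex (R R' K : Finset Pt) (t : StabType) (v P : Pt)
    (h : StabMoveAt t v R R') (hK : IsComponent R K) (hv : v ∈ K) (hP : P ∈ K) :
    ∃ R'' : Finset Pt, StabMoveAt t P R R'' ∧ Relation.ReflTransGen ExchangeMove R' R'' := by

  obtain ⟨hKR, hKd, hKn, hKmin⟩ := hK
  set S := K.filter (fun p => ∃ R'' : Finset Pt, StabMoveAt t p R R'' ∧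
    Relation.ReflTransGen ExchangeMove R' R'') with hS
  have hR := h.1
  have step : ∀ p ∈ S, ∀ q ∈ K, (q.1 = p.1 ∨ q.2 = p.2) → q ∈ S := by
    rintro ⟨x, y⟩ hp ⟨xb, yb⟩ hq hpq
    obtain ⟨hpK, R1, ⟨-, hd1, x', y', hst, ht⟩, hE⟩ := Finset.mem_filter.1 hp
    by_cases he : (xb, yb) = ((x, y) : Pt)
    · rwa [he]
    refine Finset.mem_filter.2 ⟨hq, ?_⟩
    simp only at hpq hst ht
    rcases hpq with rfl | rfl
    · have hne : y ≠ yb := by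
        rintro rfl
        exact he rfl
      obtain ⟨x'', y'', R'', k1, k2, k3, k4⟩ := stab_stepV hR hd1 hne hst (hKR hq)
      exact ⟨R'', ⟨hR, k2, x'', y'', k1, ht.trans k4⟩, hE.trans k3.1.1⟩
    · have hne : x ≠ xb := by
        rintro rfl
        exact he rfl
      obtain ⟨x'', y'', R'', k1, k2, k3, k4⟩ := stab_stepH hR hd1 hne hst (hKR hq)
      exact ⟨R'', ⟨hR, k2, x'', y'', k1, ht.trans k4⟩, hE.trans k3.1.1⟩
  have hSK : S ⊆ K := Finset.filter_subset _ _
  have hvS : v ∈ S := Finset.mem_filter.2 ⟨hv, R', h, .refl⟩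
  have hSd : IsDiagram S := by
    intro p hp
    obtain ⟨c1, c2⟩ := hKd p (hSK hp)
    constructor
    · rw [← c1]
      congr 1
      ext q
      simp only [Finset.mem_filter]
      exact ⟨fun hh => ⟨hSK hh.1, hh.2⟩, fun hh => ⟨step p hp q hh.1 (Or.inl hh.2), hh.2⟩⟩
    · rw [← c2]
      congr 1
      ext q
      simp only [Finset.mem_filter]
      exact ⟨fun hh => ⟨hSK hh.1, hh.2⟩, fun hh => ⟨step p hp q hh.1 (Or.inr hh.2), hh.2⟩⟩
  have hSeq := hKmin S hSK hSd ⟨v, hvS⟩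
  rw [← hSeq] at hP
  exact (Finset.mem_filter.1 hP).2
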